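/- Zucker's evaluation: ∑_{k≥0} C(2k,k)/(16^k·(2k+1)²) = (3√3/4)·∑_{k≥0} (1/(3k+1)² − 1/(3k+2)²), where C(2k,k) denotes the central binomial coefficient and the right-hand series is (3√3/4)·L₋₃(2), the Dirichlet L-value for the character modulo 3. -/

import Mathlib

/-!
The left-hand side is `2 ∫ t in 0..1/2, arcsin t / t`, and substituting `t = sin u` turns this
integrand into `u * cot u`. The same integrand appears when the dilogarithm is differentiated along
`z = 1 - exp (-2 * i * u)`: there `log (1 - z) = -2 * i * u` is elementary, so
`d/du Li₂(z) = 2 * u + 2 * i * u * cot u`.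
The curve stays in the closed unit disc for `|u| ≤ π / 6`, because `|z| = 2 |sin u|`. Hence the sum
is `Im Li₂(z)` at `u = π / 6`, where `z = exp (i * π / 3)` satisfies `z ^ 3 = -1`. The duplication
formula moves this to the cube root of unity `z ^ 2`, and there sorting the series by residues
modulo 3 produces `L₋₃(2)`.
-/

open Real
open scoped Nat ComplexConjugate

section PowerSeries

variable {𝕜 : Type*} [RCLike 𝕜]

theorem norm_mul_pow_le_of_norm_le {a z : 𝕜} {C r : ℝ} (ha : ‖a‖ ≤ C) (hz : ‖z‖ ≤ r) (k : ℕ) :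
    ‖a * z ^ k‖ ≤ C * r ^ k := by
  rw [norm_mul, norm_pow]
  gcongr
  exact (norm_nonneg a).trans ha

variable {a : ℕ → 𝕜} {C : ℝ} {e : ℕ → ℕ}

theorem summable_const_mul_pow_of_injective (he : e.Injective) {r : ℝ} (hr₀ : 0 ≤ r) (hr : r < 1) :
    Summable fun n ↦ C * r ^ e n :=
  ((summable_geometric_of_lt_one hr₀ hr).comp_injective he).mul_left C

theorem summable_mul_pow_of_injective (ha : ∀ n, ‖a n‖ ≤ C) (he : e.Injective) {z : 𝕜}
    (hz : ‖z‖ < 1) : Summable fun n ↦ a n * z ^ e n :=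
  .of_norm_bounded (summable_const_mul_pow_of_injective he (norm_nonneg z) hz)
    fun n ↦ norm_mul_pow_le_of_norm_le (ha n) le_rfl (e n)

theorem hasDerivAt_tsum_div_mul_pow_succ (ha : ∀ n, ‖a n‖ ≤ C) (he : e.Injective) {z : 𝕜}
    (hz : ‖z‖ < 1) :
    HasDerivAt (fun w ↦ ∑' n, a n / (e n + 1) * w ^ (e n + 1)) (∑' n, a n * z ^ e n) z := by
  obtain ⟨r, hzr, hr⟩ := exists_between hz
  have hr₀ : 0 < r := (norm_nonneg z).trans_lt hzr
  have hderiv (n : ℕ) (w : 𝕜) :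
      HasDerivAt (fun w ↦ a n / (e n + 1) * w ^ (e n + 1)) (a n * w ^ e n) w := by
    have hne : (e n : 𝕜) + 1 ≠ 0 := Nat.cast_add_one_ne_zero (e n)
    refine ((hasDerivAt_pow (e n + 1) w).const_mul _).congr_deriv ?_
    simp [field]
  refine hasDerivAt_tsum_of_isPreconnected (t := Metric.ball 0 r) (y₀ := 0)
    (u := fun n ↦ C * r ^ e n)
    (summable_const_mul_pow_of_injective he hr₀.le hr) Metric.isOpen_ball
    (convex_ball 0 r).isPreconnected (fun n w _ ↦ hderiv n w) (fun n w hw ↦ ?_)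
    (Metric.mem_ball_self hr₀) (by simp) (by simpa using hzr)
  exact norm_mul_pow_le_of_norm_le (ha n) (mem_ball_zero_iff.mp hw).le (e n)

end PowerSeries

section Dilogarithm

/-- The dilogarithm `Li₂(z) = ∑_{n ≥ 1} zⁿ / n²`, summed from `n = 0` with `n` shifted by one. It is
meaningful on the closed unit disc, where the series converges. -/
noncomputable def dilog (z : ℂ) : ℂ := ∑' n : ℕ, z ^ (n + 1) / ((n : ℂ) + 1) ^ 2

theorem summable_one_div_succ_sq : Summable fun n : ℕ ↦ 1 / ((n : ℝ) + 1) ^ 2 := by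
  simpa using (summable_nat_add_iff 1).mpr (Real.summable_one_div_nat_pow.mpr one_lt_two)

theorem norm_natCast_add_one (n : ℕ) : ‖(n : ℂ) + 1‖ = n + 1 :=
  mod_cast Complex.norm_natCast (n + 1)

theorem norm_pow_succ_div_succ_sq_le {z : ℂ} (hz : ‖z‖ ≤ 1) (n : ℕ) :
    ‖z ^ (n + 1) / ((n : ℂ) + 1) ^ 2‖ ≤ 1 / ((n : ℝ) + 1) ^ 2 := by
  rw [norm_div, norm_pow, norm_pow, norm_natCast_add_one]
  gcongr
  exact pow_le_one₀ (norm_nonneg z) hz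

theorem summable_dilog {z : ℂ} (hz : ‖z‖ ≤ 1) :
    Summable fun n : ℕ ↦ z ^ (n + 1) / ((n : ℂ) + 1) ^ 2 :=
  .of_norm_bounded summable_one_div_succ_sq (norm_pow_succ_div_succ_sq_le hz)

theorem continuousOn_dilog : ContinuousOn dilog (Metric.closedBall 0 1) :=
  continuousOn_tsum (fun n ↦ by fun_prop) summable_one_div_succ_sq
    fun n _ hz ↦ norm_pow_succ_div_succ_sq_le (mem_closedBall_zero_iff.mp hz) n

@[simp]
theorem dilog_zero : dilog 0 = 0 := by
  simp [dilog]

theorem dilog_conj (z : ℂ) : dilog (conj z) = conj (dilog z) := by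
  simp [dilog, Complex.conj_tsum]

theorem hasDerivAt_dilog {z : ℂ} (hz : ‖z‖ < 1) (hz₀ : z ≠ 0) :
    HasDerivAt dilog (-Complex.log (1 - z) / z) z := by
  have hbound (n : ℕ) : ‖1 / ((n : ℂ) + 1)‖ ≤ 1 := by
    rw [norm_div, norm_one, norm_natCast_add_one]
    exact div_le_one_of_le₀ (by simp) (by positivity)
  have hsum : ∑' n : ℕ, 1 / ((n : ℂ) + 1) * z ^ n = -Complex.log (1 - z) / z := by
    rw [eq_div_iff hz₀, ← (Complex.hasSum_taylorSeries_neg_log' hz).tsum_eq, ← tsum_mul_right]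
    congr! 2 with n
    ring
  have hdilog : dilog = fun w ↦ ∑' n : ℕ, 1 / ((n : ℂ) + 1) / (n + 1) * w ^ (n + 1) := by
    ext w
    rw [dilog]
    congr! 2 with n
    field_simp
  rw [← hsum, hdilog]
  exact hasDerivAt_tsum_div_mul_pow_succ hbound Function.injective_id hz

theorem dilog_sq {z : ℂ} (hz : ‖z‖ ≤ 1) : dilog (z ^ 2) = 2 * (dilog z + dilog (-z)) := by
  have hs := summable_dilog hz
  have hs_neg := summable_dilog (z := -z) (by rwa [norm_neg])
  set f : ℕ → ℂ := fun n ↦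
    2 * (z ^ (n + 1) / ((n : ℂ) + 1) ^ 2 + (-z) ^ (n + 1) / ((n : ℂ) + 1) ^ 2) with hf
  have hf_even {n : ℕ} (hn : Even n) : f n = 0 := by
    simp [hf, hn.add_one.neg_pow, neg_div]
  have hf_odd (k : ℕ) : f (2 * k + 1) = (z ^ 2) ^ (k + 1) / ((k : ℂ) + 1) ^ 2 := by
    have hk : (k : ℂ) + 1 ≠ 0 := Nat.cast_add_one_ne_zero k
    have hcast : ((2 * k + 1 : ℕ) : ℂ) + 1 = 2 * (k + 1) := by push_cast; ring
    simp only [hf, hcast, show 2 * k + 1 + 1 = 2 * (k + 1) by ring, (even_two_mul _).neg_pow,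
      pow_mul]
    field_simp
    ring
  have hinj : Function.Injective fun k : ℕ ↦ 2 * k + 1 := fun _ _ h ↦ by simpa using h
  have hsupport : Function.support f ⊆ Set.range fun k : ℕ ↦ 2 * k + 1 := fun n hn ↦ by
    obtain ⟨k, hk⟩ := Nat.not_even_iff_odd.mp (mt hf_even hn)
    exact ⟨k, hk.symm⟩
  calc dilog (z ^ 2) = ∑' k, f (2 * k + 1) := by simp only [dilog, hf_odd]
    _ = ∑' n, f n := hinj.tsum_eq hsupport
    _ = 2 * (dilog z + dilog (-z)) := by rw [tsum_mul_left, hs.tsum_add hs_neg, dilog, dilog]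

theorem sq_eq_conj_of_pow_three_eq_one {z : ℂ} (hz : z ^ 3 = 1) : z ^ 2 = conj z := by
  rw [← Complex.inv_eq_conj (Complex.norm_eq_one_of_pow_eq_one hz three_ne_zero)]
  exact eq_inv_of_mul_eq_one_left (by rw [← pow_succ, hz])

theorem dilog_im_of_pow_three_eq_one {z : ℂ} (hz : z ^ 3 = 1) :
    (dilog z).im =
      z.im * ∑' k : ℕ, (1 / (3 * (k : ℝ) + 1) ^ 2 - 1 / (3 * (k : ℝ) + 2) ^ 2) := by
  have hs := summable_dilog (Complex.norm_eq_one_of_pow_eq_one hz three_ne_zero).le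
  set f : ℕ → ℝ := fun n ↦ (z ^ (n + 1) / ((n : ℂ) + 1) ^ 2).im with hf
  have hf_im (n : ℕ) : f n = (z ^ (n + 1)).im / ((n : ℝ) + 1) ^ 2 := by
    rw [hf, ← Complex.div_ofReal_im]
    push_cast
    rfl
  have hfs : Summable f := (Complex.hasSum_im hs.hasSum).summable
  have hpow (k j : ℕ) : z ^ (j + 3 * k) = z ^ j := by rw [pow_add, pow_mul, hz, one_pow, mul_one]
  have hf₀ (k : ℕ) : f (0 + 3 * k) = z.im * (1 / (3 * (k : ℝ) + 1) ^ 2) := by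
    rw [hf_im, show 0 + 3 * k + 1 = 1 + 3 * k by ring, hpow, pow_one]
    push_cast
    ring
  have hf₁ (k : ℕ) : f (1 + 3 * k) = -(z.im * (1 / (3 * (k : ℝ) + 2) ^ 2)) := by
    rw [hf_im, show 1 + 3 * k + 1 = 2 + 3 * k by ring, hpow, sq_eq_conj_of_pow_three_eq_one hz,
      Complex.conj_im]
    push_cast
    ring
  have hf₂ (k : ℕ) : f (2 + 3 * k) = 0 := by
    rw [hf_im, show 2 + 3 * k + 1 = 3 + 3 * k by ring, hpow, hz]
    simp
  have hresidue : ∑' n, f n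
      = ∑' k, f (0 + 3 * k) + ∑' k, f (1 + 3 * k) + ∑' k, f (2 + 3 * k) := by
    rw [Nat.sumByResidueClasses hfs 3]
    exact Fin.sum_univ_three fun j : Fin 3 ↦ ∑' k, f (j.val + 3 * k)
  have hf_comp (j : ℕ) : Summable fun k ↦ f (j + 3 * k) :=
    hfs.comp_injective (i := fun k ↦ j + 3 * k) fun _ _ h ↦ by simpa using h
  rw [dilog, Complex.im_tsum hs, hresidue, ← (hf_comp 0).tsum_add (hf_comp 1), ← tsum_mul_left]
  simp only [hf₀, hf₁, hf₂, tsum_zero, add_zero]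
  congr! 2 with k
  ring

theorem dilog_im_of_pow_three_eq_neg_one {z : ℂ} (hz : z ^ 3 = -1) :
    (dilog z).im = 3 / 2 * (dilog (z ^ 2)).im := by
  have hz₆ : (z ^ 2) ^ 3 = 1 := by rw [← pow_mul, mul_comm, pow_mul, hz, neg_one_sq]
  have hnorm : ‖z‖ = 1 :=
    Complex.norm_eq_one_of_pow_eq_one (n := 6) (by rw [← hz₆, ← pow_mul]) (by norm_num)
  have hneg : -z = conj (z ^ 2) := by
    rw [← sq_eq_conj_of_pow_three_eq_one hz₆]
    linear_combination -z * hz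
  have hdup := congrArg Complex.im (dilog_sq hnorm.le)
  rw [hneg, dilog_conj] at hdup
  simp only [Complex.mul_im, Complex.re_ofNat, Complex.add_im, Complex.conj_im, Complex.im_ofNat,
    Complex.add_re, Complex.conj_re, zero_mul, add_zero] at hdup
  linarith

end Dilogarithm

section Arcsin

theorem choose_half_add_natCast_sub_one_eq_centralBinom_div (n : ℕ) :
    Ring.choose ((1 / 2 : ℝ) + n - 1) n = n.centralBinom / 4 ^ n := by
  have hpoch (n : ℕ) : (n ! : ℝ) * (n.centralBinom / 4 ^ n) =
      (ascPochhammer ℝ n).eval (1 / 2) := by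
    induction n with
    | zero => simp
    | succ n ih =>
      have hrec : ((n : ℝ) + 1) * (n + 1).centralBinom = 2 * (2 * n + 1) * n.centralBinom := by
        exact_mod_cast n.succ_mul_centralBinom_succ
      rw [ascPochhammer_succ_eval, ← ih, Nat.factorial_succ, pow_succ]
      push_cast
      field_simp
      linear_combination 2 * hrec
  have hmul := Ring.factorial_nsmul_multichoose_eq_ascPochhammer (1 / 2 : ℝ) n
  rw [Polynomial.ascPochhammer_smeval_eq_eval, Ring.multichoose_eq, nsmul_eq_mul, ← hpoch] at hmul
  exact mul_left_cancel₀ (mod_cast n.factorial_ne_zero) hmul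

theorem hasSum_centralBinom_div_mul_pow {x : ℝ} (hx : |x| < 1) :
    HasSum (fun n : ℕ ↦ (n.centralBinom : ℝ) / 4 ^ n * x ^ n) (1 / √(1 - x)) := by
  have h := (one_div_one_sub_rpow_hasFPowerSeriesOnBall_zero (1 / 2)).hasSum (y := x)
    (by simpa [enorm_eq_nnnorm, ← NNReal.coe_lt_one] using hx)
  simpa only [FormalMultilinearSeries.ofScalars_apply_eq, smul_eq_mul, zero_add, ← sqrt_eq_rpow,
    choose_half_add_natCast_sub_one_eq_centralBinom_div] using h

theorem norm_centralBinom_div_le (n : ℕ) : ‖(n.centralBinom : ℝ) / 4 ^ n‖ ≤ 1 := by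
  rw [Real.norm_of_nonneg (by positivity), div_le_one (by positivity)]
  exact_mod_cast n.centralBinom_le_four_pow

theorem norm_centralBinom_div_div_le (n : ℕ) :
    ‖(n.centralBinom : ℝ) / 4 ^ n / (2 * n + 1)‖ ≤ 1 := by
  rw [norm_div, Real.norm_of_nonneg (by positivity : (0 : ℝ) ≤ 2 * n + 1)]
  exact div_le_one_of_le₀ ((norm_centralBinom_div_le n).trans (by simp)) (by positivity)

theorem hasDerivAt_tsum_div_mul_pow_two_mul_add_one {a : ℕ → ℝ} {C : ℝ} (ha : ∀ n, ‖a n‖ ≤ C)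
    {x : ℝ} (hx : |x| < 1) :
    HasDerivAt (fun y ↦ ∑' n : ℕ, a n / (2 * n + 1) * y ^ (2 * n + 1))
      (∑' n, a n * x ^ (2 * n)) x := by
  simpa using hasDerivAt_tsum_div_mul_pow_succ ha (mul_right_injective₀ two_ne_zero) hx

theorem hasSum_arcsin {x : ℝ} (hx : |x| < 1) :
    HasSum (fun n : ℕ ↦ (n.centralBinom : ℝ) / 4 ^ n / (2 * n + 1) * x ^ (2 * n + 1))
      (arcsin x) := by
  set F : ℝ → ℝ := fun y ↦
    ∑' n : ℕ, (n.centralBinom : ℝ) / 4 ^ n / (2 * n + 1) * y ^ (2 * n + 1) with hF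
  have hF_deriv {y : ℝ} (hy : y ∈ Set.Ioo (-1) 1) : HasDerivAt F (1 / √(1 - y ^ 2)) y := by
    have hy' : |y ^ 2| < 1 := by rwa [abs_sq, sq_lt_one_iff_abs_lt_one, abs_lt]
    rw [← (hasSum_centralBinom_div_mul_pow hy').tsum_eq]
    simp only [← pow_mul]
    exact hasDerivAt_tsum_div_mul_pow_two_mul_add_one norm_centralBinom_div_le (abs_lt.mpr hy)
  have harcsin_deriv {y : ℝ} (hy : y ∈ Set.Ioo (-1) 1) :
      HasDerivAt arcsin (1 / √(1 - y ^ 2)) y :=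
    hasDerivAt_arcsin hy.1.ne' hy.2.ne
  have heq : Set.EqOn F arcsin (Set.Ioo (-1) 1) :=
    isOpen_Ioo.eqOn_of_deriv_eq isPreconnected_Ioo
      (fun _ hy ↦ (hF_deriv hy).differentiableAt.differentiableWithinAt)
      (fun _ hy ↦ (harcsin_deriv hy).differentiableAt.differentiableWithinAt)
      (fun _ hy ↦ by rw [(hF_deriv hy).deriv, (harcsin_deriv hy).deriv])
      (x := 0) (by simp) (by simp [hF])
  rw [← heq (abs_lt.mp hx)]
  exact (summable_mul_pow_of_injective (e := fun n ↦ 2 * n + 1) norm_centralBinom_div_div_le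
    (fun _ _ h ↦ by simpa using h) hx).hasSum

/-- The integral `∫ t in 0..x, arcsin t / t`, by its power series on the interval `(-1, 1)`. -/
noncomputable def arcsinIntegral (x : ℝ) : ℝ :=
  ∑' n : ℕ, (n.centralBinom : ℝ) / 4 ^ n / (2 * n + 1) ^ 2 * x ^ (2 * n + 1)

theorem tsum_centralBinom_div_mul_pow_eq_dslope_arcsin {x : ℝ} (hx : |x| < 1) :
    ∑' n : ℕ, (n.centralBinom : ℝ) / 4 ^ n / (2 * n + 1) * x ^ (2 * n) = dslope arcsin 0 x := by
  rcases eq_or_ne x 0 with rfl | hx₀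
  · rw [dslope_same, (hasDerivAt_arcsin (by simp) (by simp)).deriv,
      tsum_eq_single 0 fun n hn ↦ by simp [hn]]
    simp
  · rw [dslope_of_ne _ hx₀, slope_def_field, arcsin_zero, sub_zero, sub_zero, eq_div_iff hx₀,
      ← (hasSum_arcsin hx).tsum_eq, ← tsum_mul_right]
    simp only [pow_succ, mul_assoc]

theorem hasDerivAt_arcsinIntegral {x : ℝ} (hx : |x| < 1) :
    HasDerivAt arcsinIntegral (dslope arcsin 0 x) x := by
  have hseries : arcsinIntegral = fun y ↦ ∑' n : ℕ,
      (n.centralBinom : ℝ) / 4 ^ n / (2 * n + 1) / (2 * n + 1) * y ^ (2 * n + 1) := by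
    ext y
    simp only [arcsinIntegral, div_div, sq, mul_assoc]
  rw [hseries, ← tsum_centralBinom_div_mul_pow_eq_dslope_arcsin hx]
  exact hasDerivAt_tsum_div_mul_pow_two_mul_add_one norm_centralBinom_div_div_le hx

theorem continuousOn_arcsinIntegral : ContinuousOn arcsinIntegral (Set.Ioo (-1) 1) :=
  fun _ hx ↦ (hasDerivAt_arcsinIntegral (abs_lt.mpr hx)).continuousAt.continuousWithinAt

theorem abs_sin_lt_one {u : ℝ} (hu : |u| < π / 2) : |sin u| < 1 := by
  rw [← sq_lt_one_iff_abs_lt_one, sin_sq, sub_lt_self_iff]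
  exact pow_pos (cos_pos_of_mem_Ioo (abs_lt.mp hu)) 2

theorem hasDerivAt_arcsinIntegral_sin {u : ℝ} (hu : |u| < π / 2) (hu₀ : u ≠ 0) :
    HasDerivAt (fun v ↦ arcsinIntegral (sin v)) (u * cot u) u := by
  obtain ⟨hu_neg, hu_pos⟩ := abs_lt.mp hu
  have hsin : sin u ≠ 0 := by
    rwa [Ne, sin_eq_zero_iff_of_lt_of_lt (by linarith) (by linarith)]
  refine ((hasDerivAt_arcsinIntegral (abs_sin_lt_one hu)).comp u (hasDerivAt_sin u)).congr_deriv ?_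
  rw [dslope_of_ne _ hsin, slope_def_field, arcsin_zero, arcsin_sin hu_neg.le hu_pos.le,
    cot_eq_cos_div_sin]
  ring

end Arcsin

section Comparison

open Complex (I)

theorem exp_neg_two_mul_I (u : ℂ) : Complex.exp (-2 * u * I) = Complex.exp (-u * I) ^ 2 := by
  rw [← Complex.exp_nat_mul]
  ring_nf

theorem one_sub_exp_neg_two_mul_I (u : ℂ) :
    1 - Complex.exp (-2 * u * I) = 2 * I * Complex.sin u * Complex.exp (-u * I) := by
  rw [exp_neg_two_mul_I, Complex.exp_mul_I, Complex.cos_neg, Complex.sin_neg]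
  linear_combination -Complex.sin_sq_add_cos_sq u + Complex.sin u ^ 2 * Complex.I_sq

theorem norm_one_sub_exp_neg_two_mul_I (u : ℝ) :
    ‖1 - Complex.exp (-2 * u * I)‖ = 2 * |sin u| := by
  rw [norm_sub_rev, show -2 * (u : ℂ) * I = I * ((-2 * u : ℝ) : ℂ) by push_cast; ring,
    Complex.norm_exp_I_mul_ofReal_sub_one]
  simp [neg_div]

theorem norm_one_sub_exp_le_one {u : ℝ} (hu : |u| ≤ π / 6) :
    ‖1 - Complex.exp (-2 * u * I)‖ ≤ 1 := by
  have hsin : sin |u| ≤ sin (π / 6) :=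
    sin_le_sin_of_le_of_le_pi_div_two (by linarith [pi_pos, abs_nonneg u])
      (by linarith [pi_pos]) hu
  rw [sin_pi_div_six] at hsin
  rw [norm_one_sub_exp_neg_two_mul_I, abs_sin_eq_sin_abs_of_abs_le_pi (by linarith [pi_pos])]
  linarith

theorem norm_one_sub_exp_lt_one {u : ℝ} (hu : |u| < π / 6) :
    ‖1 - Complex.exp (-2 * u * I)‖ < 1 := by
  have hsin : sin |u| < sin (π / 6) :=
    sin_lt_sin_of_lt_of_le_pi_div_two (by linarith [pi_pos, abs_nonneg u])
      (by linarith [pi_pos]) hu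
  rw [sin_pi_div_six] at hsin
  rw [norm_one_sub_exp_neg_two_mul_I, abs_sin_eq_sin_abs_of_abs_le_pi (by linarith [pi_pos])]
  linarith

theorem hasDerivAt_dilog_one_sub_exp {u : ℝ} (hu : |u| < π / 6) (hu₀ : u ≠ 0) :
    HasDerivAt (fun v : ℝ ↦ dilog (1 - Complex.exp (-2 * v * I)))
      (2 * u + 2 * I * (u * cot u : ℝ)) u := by
  obtain ⟨hu_neg, hu_pos⟩ := abs_lt.mp hu
  have hsin : Complex.sin u ≠ 0 := by
    rw [← Complex.ofReal_sin, Complex.ofReal_ne_zero, Ne,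
      sin_eq_zero_iff_of_lt_of_lt (by linarith) (by linarith)]
    exact hu₀
  have hz₀ : 1 - Complex.exp (-2 * u * I) ≠ 0 := by
    rw [one_sub_exp_neg_two_mul_I]
    simp [hsin]
  have hlog : Complex.log (1 - (1 - Complex.exp (-2 * u * I))) = -2 * u * I := by
    have him : (-2 * u * I).im = -2 * u := by simp
    rw [sub_sub_cancel, Complex.log_exp (by linarith) (by linarith)]
  have hz : HasDerivAt (fun v : ℝ ↦ 1 - Complex.exp (-2 * v * I))
      (2 * I * Complex.exp (-2 * u * I)) u := by
    have hcexp := (((hasDerivAt_id (u : ℂ)).const_mul (-2)).mul_const I).cexp.const_sub 1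
    refine hcexp.comp_ofReal.congr_deriv ?_
    simp only [id_eq, neg_mul, mul_one, mul_neg, neg_neg]
    ring
  refine ((hasDerivAt_dilog (norm_one_sub_exp_lt_one hu) hz₀).comp u hz).congr_deriv ?_
  rw [hlog, div_mul_eq_mul_div, div_eq_iff hz₀]
  push_cast
  rw [one_sub_exp_neg_two_mul_I, exp_neg_two_mul_I, Complex.cot_eq_cos_div_sin]
  field_simp
  rw [← neg_mul, Complex.exp_mul_I, Complex.cos_neg, Complex.sin_neg]
  linear_combination -u * Complex.sin u * Complex.I_sq

theorem dilog_one_sub_exp {u : ℝ} (hu : |u| ≤ π / 6) :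
    dilog (1 - Complex.exp (-2 * u * I)) = u ^ 2 + 2 * I * arcsinIntegral (sin u) := by
  set f : ℝ → ℂ := fun v ↦
    dilog (1 - Complex.exp (-2 * v * I)) - (v ^ 2 + 2 * I * arcsinIntegral (sin v)) with hf
  have habs {v : ℝ} (hv : v ∈ Set.uIcc 0 u) : |v| ≤ π / 6 := by
    simpa using (Set.abs_sub_left_of_mem_uIcc hv).trans (by simpa using hu)
  have hcont : ContinuousOn f (Set.uIcc 0 u) := by
    have hdilog := continuousOn_dilog.comp (s := Set.uIcc 0 u)
      (f := fun v : ℝ ↦ 1 - Complex.exp (-2 * v * I)) (by fun_prop)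
      fun v hv ↦ mem_closedBall_zero_iff.mpr (norm_one_sub_exp_le_one (habs hv))
    have harcsin := continuousOn_arcsinIntegral.comp (s := Set.uIcc 0 u) continuousOn_sin
      fun v hv ↦ abs_lt.mp (abs_sin_lt_one (by linarith [habs hv, pi_pos]))
    exact hdilog.sub (.add (by fun_prop) (continuousOn_const.mul
      (Complex.continuous_ofReal.comp_continuousOn harcsin)))
  have hderiv {v : ℝ} (hv : v ∈ Set.Ioo (min 0 u) (max 0 u)) : HasDerivAt f 0 v := by
    have hv₀ : v ≠ 0 := by
      rintro rfl
      grind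
    have hv₆ : |v| < π / 6 := by
      grind [abs_lt, abs_le]
    have hsq : HasDerivAt (fun v : ℝ ↦ (v : ℂ) ^ 2) (2 * v) v := by
      simpa using (hasDerivAt_pow 2 (v : ℂ)).comp_ofReal
    have harcsin := (hasDerivAt_arcsinIntegral_sin (by linarith [pi_pos]) hv₀).ofReal_comp
    refine ((hasDerivAt_dilog_one_sub_exp hv₆ hv₀).sub
      (hsq.add (harcsin.const_mul (2 * I)))).congr_deriv ?_
    ring
  have hconst := intervalIntegral.integral_eq_sub_of_hasDeriv_right hcont
    (fun v hv ↦ (hderiv hv).hasDerivWithinAt) intervalIntegrable_const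
  have hf₀ : f 0 = 0 := by simp [hf, arcsinIntegral]
  rw [intervalIntegral.integral_zero, hf₀, sub_zero] at hconst
  exact sub_eq_zero.mp hconst.symm

theorem dilog_one_sub_exp_im {u : ℝ} (hu : |u| ≤ π / 6) :
    (dilog (1 - Complex.exp (-2 * u * I))).im = 2 * arcsinIntegral (sin u) := by
  rw [dilog_one_sub_exp hu]
  simp [← Complex.ofReal_pow]

end Comparison

theorem arcsinIntegral_one_half :
    arcsinIntegral (1 / 2) =
      1 / 2 * ∑' k : ℕ, ((2 * k).choose k : ℝ) / (16 ^ k * (2 * (k : ℝ) + 1) ^ 2) := by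
  rw [arcsinIntegral, ← tsum_mul_left]
  congr! 2 with k
  rw [Nat.centralBinom_eq_two_mul_choose, show (16 : ℝ) = 4 * 2 ^ 2 by norm_num, mul_pow,
    ← pow_mul, one_div, inv_pow]
  field_simp
  ring

theorem one_sub_exp_neg_pi_div_three_mul_I :
    1 - Complex.exp (-2 * (π / 6 : ℝ) * Complex.I) = 1 / 2 + √3 / 2 * Complex.I := by
  rw [show -2 * ((π / 6 : ℝ) : ℂ) * Complex.I = ((-(π / 3) : ℝ) : ℂ) * Complex.I by
    push_cast; ring, Complex.exp_mul_I, ← Complex.ofReal_cos, ← Complex.ofReal_sin, cos_neg,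
    sin_neg, cos_pi_div_three, sin_pi_div_three]
  push_cast
  ring

theorem one_half_add_sqrt_three_div_two_mul_I_sq :
    (1 / 2 + √3 / 2 * Complex.I) ^ 2 = -1 / 2 + √3 / 2 * Complex.I := by
  have hsqrt : ((√3 : ℝ) : ℂ) ^ 2 = 3 := mod_cast sq_sqrt zero_le_three
  linear_combination 1 / 4 * Complex.I ^ 2 * hsqrt + 3 / 4 * Complex.I_sq

theorem one_half_add_sqrt_three_div_two_mul_I_pow_three :
    (1 / 2 + √3 / 2 * Complex.I) ^ 3 = -1 := by
  linear_combination (3 / 2 + √3 / 2 * Complex.I) * one_half_add_sqrt_three_div_two_mul_I_sq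

/-- Zucker's evaluation:
`∑_{k≥0} C(2k,k)/(16^k·(2k+1)²) = (3√3/4)·∑_{k≥0} (1/(3k+1)² − 1/(3k+2)²)`,
the right-hand side being `(3√3/4)·L₋₃(2)`. -/
theorem zucker_binomial_sum :
    (∑' k : ℕ, ((2 * k).choose k : ℝ) / (16^k * (2 * (k : ℝ) + 1)^2))
      = (3 * Real.sqrt 3 / 4) *
          (∑' k : ℕ, (1 / (3 * (k : ℝ) + 1)^2 - 1 / (3 * (k : ℝ) + 2)^2)) := by
  set z : ℂ := 1 / 2 + √3 / 2 * Complex.I with hz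
  have hz_cube : z ^ 3 = -1 := one_half_add_sqrt_three_div_two_mul_I_pow_three
  have hz_sq_cube : (z ^ 2) ^ 3 = 1 := by rw [← pow_mul, mul_comm, pow_mul, hz_cube, neg_one_sq]
  have hz_sq_im : (z ^ 2).im = √3 / 2 := by
    rw [hz, one_half_add_sqrt_three_div_two_mul_I_sq]
    simp
  have him : (dilog z).im = 2 * arcsinIntegral (1 / 2) := by
    rw [hz, ← one_sub_exp_neg_pi_div_three_mul_I,
      dilog_one_sub_exp_im (abs_of_pos (by positivity)).le, sin_pi_div_six]
  rw [arcsinIntegral_one_half, dilog_im_of_pow_three_eq_neg_one hz_cube,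
    dilog_im_of_pow_three_eq_one hz_sq_cube, hz_sq_im] at him
  linarith
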